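/- arXiv:math/9911139 — 2 statements merged into one kernel-verified Lean document; each statement's English description precedes it below -/
import Mathlib

section
/- Fix nonzero complex numbers a and b, and a complex number x with x + x⁻¹ = 3. Define 3×3 complex matrices U = (u_{ij}) and W = (v^{ij}) whose only nonzero entries are u_{13} = a, u_{22} = b, u_{31} = −a/x and v^{13} = x/(2a), v^{22} = −1/(2b), v^{31} = −1/(2a). Then: (1) Σ_{i,j} u_{ij} v^{ij} = 1; (2) U W Uᵗ Wᵗ = (1/4)·Id; and (3) 2 Σ_j u_{ij} v^{jk} = −δ_i^k for all i, k, i.e. 2 U W = −Id. -/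
/-!
The matrices satisfy `U W = W U = -(1/2)·Id` as soon as `a`, `b`, `x` are nonzero. The centrality
condition is the first of these equations, and the Yang–Baxter condition follows from both since
`Uᵗ Wᵗ = (W U)ᵗ`. The relation `x + x⁻¹ = 3` is what makes the normalization
`(x - 1 + x⁻¹) / 2 = 1` hold.
-/

open Matrix

/-- The two-parameter family of skew-diagonal solutions on `ℂ³`: with `x + x⁻¹ = 3`,
`u₁₃ = a`, `u₂₂ = b`, `u₃₁ = −a/x`, `v¹³ = x/(2a)`, `v²² = −1/(2b)`, `v³¹ = −1/(2a)`,
one has (1) `Σ u_{ij} v^{ij} = 1`, (2) `U W Uᵗ Wᵗ = (1/4)·Id`, and (3) `2 U W = −Id`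
(centrality of the determinant). -/
theorem skew_diagonal_family (a b x : ℂ) (ha : a ≠ 0) (hb : b ≠ 0)
    (hx : x + x⁻¹ = 3) :
    ∑ i, ∑ j, (!![0, 0, a; 0, b, 0; -a / x, 0, 0] : Matrix (Fin 3) (Fin 3) ℂ) i j *
        (!![0, 0, x / (2 * a); 0, -1 / (2 * b), 0; -1 / (2 * a), 0, 0] :
          Matrix (Fin 3) (Fin 3) ℂ) i j = 1 ∧
    (!![0, 0, a; 0, b, 0; -a / x, 0, 0] : Matrix (Fin 3) (Fin 3) ℂ) *
        !![0, 0, x / (2 * a); 0, -1 / (2 * b), 0; -1 / (2 * a), 0, 0] *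
        (!![0, 0, a; 0, b, 0; -a / x, 0, 0] : Matrix (Fin 3) (Fin 3) ℂ)ᵀ *
        (!![0, 0, x / (2 * a); 0, -1 / (2 * b), 0; -1 / (2 * a), 0, 0] :
          Matrix (Fin 3) (Fin 3) ℂ)ᵀ =
      (1 / 4 : ℂ) • (1 : Matrix (Fin 3) (Fin 3) ℂ) ∧
    (2 : ℂ) • ((!![0, 0, a; 0, b, 0; -a / x, 0, 0] : Matrix (Fin 3) (Fin 3) ℂ) *
        !![0, 0, x / (2 * a); 0, -1 / (2 * b), 0; -1 / (2 * a), 0, 0]) =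
      -(1 : Matrix (Fin 3) (Fin 3) ℂ) := by
  -- `x = 0` would give `0 = 3`, because `0⁻¹ = 0`.
  have hx0 : x ≠ 0 := by
    rintro rfl
    norm_num at hx
  have hUW : (!![0, 0, a; 0, b, 0; -a / x, 0, 0] : Matrix (Fin 3) (Fin 3) ℂ) *
      (!![0, 0, x / (2 * a); 0, -1 / (2 * b), 0; -1 / (2 * a), 0, 0] :
        Matrix (Fin 3) (Fin 3) ℂ) =
      (-1 / 2 : ℂ) • 1 := by
    ext i j
    fin_cases i <;> fin_cases j <;> simp <;> field_simp
  have hWU : (!![0, 0, x / (2 * a); 0, -1 / (2 * b), 0; -1 / (2 * a), 0, 0] :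
        Matrix (Fin 3) (Fin 3) ℂ) *
      (!![0, 0, a; 0, b, 0; -a / x, 0, 0] : Matrix (Fin 3) (Fin 3) ℂ) =
      (-1 / 2 : ℂ) • 1 := by
    ext i j
    fin_cases i <;> fin_cases j <;> simp <;> field_simp
  refine ⟨?_, ?_, ?_⟩
  · -- The sum is `x / 2 - 1 / 2 + x⁻¹ / 2`; only this part needs the value of `x + x⁻¹`.
    have h13 : a * (x / (2 * a)) = x / 2 := by field_simp
    have h22 : b * (-1 / (2 * b)) = -1 / 2 := by field_simp
    have h31 : -a / x * (-1 / (2 * a)) = x⁻¹ / 2 := by field_simp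
    simp only [Fin.sum_univ_three, of_apply, cons_val, mul_zero, zero_add, add_zero,
      h13, h22, h31]
    linear_combination hx / 2
  · -- `U W Uᵗ Wᵗ = (U W) (W U)ᵗ`, a product of two copies of `-1/2`.
    rw [Matrix.mul_assoc, ← transpose_mul, hUW, hWU, transpose_smul, transpose_one,
      smul_mul_smul_comm, Matrix.mul_one]
    norm_num
  · rw [hUW, smul_smul]
    norm_num
end

section
/- Let n ≥ 3 be an integer and let α₁ = (n − √(n² − 4))/2 and α₂ = (n + √(n² − 4))/2 be the two roots of t² − n t + 1 = 0, so that 0 < α₁ < 1 < α₂ and α₁ α₂ = 1. For each natural number l set m_l := (α₂^{2l+1} − α₁^{2l+1})/(α₂ − α₁) and λ_l := 2l² + 2l, and for real λ define N(λ) := Σ_{l ∈ ℕ, λ_l ≤ λ} m_l. Then, with β := 1/((α₂ − α₁)(α₂² − 1)) > 0, one has limsup_{λ → ∞} N(λ)·α₂^{−√(2λ)} = β·α₂² and liminf_{λ → ∞} N(λ)·α₂^{−√(2λ)} = β. In particular, N(λ) grows exponentially in √λ and N(λ)·α₂^{−√(2λ)} has no limit as λ → ∞. -/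
/-!
Write `a = α₂`, `b = α₁ = a⁻¹`. If `L` is the largest index with `λ_L ≤ λ`, summing the two
geometric series gives `N(λ) = β (a^(2L+3) - 2a + b^(2L+1))`, so, up to an error `O(a^(-√(2λ)))`,
`N(λ) a^(-√(2λ))` equals `β a^(2L+3-√(2λ))` (`counting_bounds`). Since
`2 λ_l + 1 = (2l+1)^2`, the index `L` is characterised by `2L+1 ≤ √(2λ+1) < 2L+3`; hence the
exponent `2L+3-√(2λ)` lies between `0` and `2 + (√(2λ+1)-√(2λ))`, where the last difference tends
to `0`. This bounds the normalised counting function asymptotically by `β` and `β a²`. The upper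
bound is approached along the eigenvalues `λ = λ_L`, the lower one along `λ = λ_{L+1} - 1/2`,
just before the next jump.
-/

open Filter

/-- A function eventually bounded below, with an asymptotic upper bound converging to `A`,
and converging to `A` itself
along some sequence going to infinity, has upper limit `A`. -/
lemma limsup_eq_of_bound_of_seq {f u : ℝ → ℝ} {x : ℕ → ℝ} {A c : ℝ}
    (hfu : ∀ᶠ t in atTop, f t ≤ u t) (hu : Tendsto u atTop (nhds A))
    (hc : ∀ᶠ t in atTop, c ≤ f t)
    (hx : Tendsto x atTop atTop) (hfx : Tendsto (fun k => f (x k)) atTop (nhds A)) :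
    limsup f atTop = A := by
  have hbf : IsBoundedUnder (· ≤ ·) atTop f := hu.isBoundedUnder_le.mono_le hfu
  have hbc : IsBoundedUnder (· ≥ ·) atTop f := ⟨c, by simpa using hc⟩
  apply le_antisymm
  · rw [← hu.limsup_eq]
    exact limsup_le_limsup hfu hbc.isCoboundedUnder_le hu.isBoundedUnder_le
  · rw [← hfx.limsup_eq]
    change limsup f (map x atTop) ≤ _
    refine limsup_le_limsup_of_le hx ?_ hbf
    have : IsBoundedUnder (· ≥ ·) (map x atTop) f := hbc.mono hx
    exact this.isCoboundedUnder_le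

/-- A function eventually bounded above, with an asymptotic lower bound converging to `A`,
and converging to `A` itself
along some sequence going to infinity, has lower limit `A`. -/
lemma liminf_eq_of_bound_of_seq {f u : ℝ → ℝ} {x : ℕ → ℝ} {A c : ℝ}
    (hfu : ∀ᶠ t in atTop, u t ≤ f t) (hu : Tendsto u atTop (nhds A))
    (hc : ∀ᶠ t in atTop, f t ≤ c)
    (hx : Tendsto x atTop atTop) (hfx : Tendsto (fun k => f (x k)) atTop (nhds A)) :
    liminf f atTop = A := by
  have hbf : IsBoundedUnder (· ≥ ·) atTop f := hu.isBoundedUnder_ge.mono_ge hfu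
  have hbc : IsBoundedUnder (· ≤ ·) atTop f := ⟨c, by simpa using hc⟩
  apply le_antisymm
  · rw [← hfx.liminf_eq]
    change _ ≤ liminf f (map x atTop)
    refine liminf_le_liminf_of_le hx hbf ?_
    have : IsBoundedUnder (· ≤ ·) (map x atTop) f := hbc.mono hx
    exact this.isCoboundedUnder_ge
  · rw [← hu.liminf_eq]
    exact liminf_le_liminf hfu hu.isBoundedUnder_ge hbc.isCoboundedUnder_ge

lemma tendsto_sqrt_two_mul : Tendsto (fun t : ℝ => Real.sqrt (2 * t)) atTop atTop :=
  Real.tendsto_sqrt_atTop.comp (tendsto_id.const_mul_atTop two_pos)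

lemma tendsto_sqrt_add_sub_sqrt {c : ℝ} (hc : 0 ≤ c) :
    Tendsto (fun t : ℝ => Real.sqrt (2 * t + c) - Real.sqrt (2 * t)) atTop (nhds 0) := by
  have h : Tendsto (fun t : ℝ => c / Real.sqrt (2 * t)) atTop (nhds 0) :=
    tendsto_const_nhds.div_atTop tendsto_sqrt_two_mul
  refine squeeze_zero' ?_ ?_ h
  · filter_upwards with t
    exact sub_nonneg.2 (Real.sqrt_le_sqrt (by linarith))
  · filter_upwards [eventually_gt_atTop 0] with t ht
    have hs : 0 < Real.sqrt (2 * t) := Real.sqrt_pos.2 (by linarith)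
    have h1 := Real.sq_sqrt (show 0 ≤ 2 * t by linarith)
    have h2 := Real.sq_sqrt (show 0 ≤ 2 * t + c by linarith)
    have h3 : Real.sqrt (2 * t) ≤ Real.sqrt (2 * t + c) := Real.sqrt_le_sqrt (by linarith)
    rw [le_div_iff₀ hs]
    nlinarith

/-- The counting function `N`, with the two roots replaced by arbitrary reals `b` and `a`. -/
noncomputable def countFn (a b : ℝ) (lam : ℝ) : ℝ :=
  ∑' l : ℕ, if 2 * (l : ℝ) ^ 2 + 2 * (l : ℝ) ≤ lam
    then (a ^ (2 * l + 1) - b ^ (2 * l + 1)) / (a - b) else 0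

lemma sum_multiplicities {a b : ℝ} (ha : 1 < a) (hab : a * b = 1) (L : ℕ) :
    ∑ l ∈ Finset.range (L + 1), (a ^ (2 * l + 1) - b ^ (2 * l + 1)) / (a - b) =
      1 / ((a - b) * (a ^ 2 - 1)) * (a ^ (2 * L + 3) - 2 * a + b ^ (2 * L + 1)) := by
  have h1 : 0 < a - b := by nlinarith
  have h2 : 0 < a ^ 2 - 1 := by nlinarith
  have h3 : b = a⁻¹ := by field_simp; linarith
  rw [← Finset.sum_div, div_eq_iff h1.ne']
  have key : ∑ l ∈ Finset.range (L + 1), (a ^ (2 * l + 1) - b ^ (2 * l + 1)) =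
      1 / (a ^ 2 - 1) * (a ^ (2 * L + 3) - 2 * a + b ^ (2 * L + 1)) := by
    induction L with
    | zero =>
      simp only [zero_add, Finset.sum_range_one, mul_zero, pow_one]
      field_simp
      linear_combination (-a) * hab
    | succ k ih =>
      rw [Finset.sum_range_succ, ih]
      field_simp
      have e1 : b ^ (2 * k + 1) = a ^ 2 * b ^ (2 * (k + 1) + 1) := by
        have : a ^ 2 * b ^ 2 = 1 := by rw [← mul_pow, hab, one_pow]
        linear_combination (-b ^ (2 * k + 1)) * this
      rw [e1]
      ring
  rw [key]
  field_simp

lemma countFn_eq {a b : ℝ} (ha : 1 < a) (hab : a * b = 1) {lam : ℝ} {L : ℕ}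
    (h1 : 2 * (L : ℝ) ^ 2 + 2 * L ≤ lam)
    (h2 : lam < 2 * ((L : ℝ) + 1) ^ 2 + 2 * ((L : ℝ) + 1)) :
    countFn a b lam =
      1 / ((a - b) * (a ^ 2 - 1)) * (a ^ (2 * L + 3) - 2 * a + b ^ (2 * L + 1)) := by
  rw [← sum_multiplicities ha hab, countFn]
  have hL : (0 : ℝ) ≤ L := L.cast_nonneg
  rw [tsum_eq_sum (s := Finset.range (L + 1))]
  · refine Finset.sum_congr rfl fun l hl => if_pos ?_
    have : (l : ℝ) ≤ L := by exact_mod_cast Nat.lt_succ_iff.1 (Finset.mem_range.1 hl)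
    have h0 : (0 : ℝ) ≤ l := l.cast_nonneg
    nlinarith
  · intro l hl
    refine if_neg ?_
    have : (L : ℝ) + 1 ≤ l := by
      have := not_lt.1 (fun h => hl (Finset.mem_range.2 h))
      exact_mod_cast this
    nlinarith

/-- For `λ_L ≤ λ < λ_{L+1}`, the normalised counting function is `β a^(2L+3-√(2λ))` up to an
error at most `2aβ a^(-√(2λ))`. -/
lemma counting_bounds {a b : ℝ} (ha : 1 < a) (hab : a * b = 1) {lam : ℝ} {L : ℕ}
    (h1 : 2 * (L : ℝ) ^ 2 + 2 * L ≤ lam)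
    (h2 : lam < 2 * ((L : ℝ) + 1) ^ 2 + 2 * ((L : ℝ) + 1)) {β : ℝ}
    (hβ : β = 1 / ((a - b) * (a ^ 2 - 1))) (hβ0 : 0 < β) :
    β * a ^ (2 * L + 3 - Real.sqrt (2 * lam)) - β * (2 * a) * a ^ (-Real.sqrt (2 * lam))
        ≤ countFn a b lam * a ^ (-Real.sqrt (2 * lam)) ∧
      countFn a b lam * a ^ (-Real.sqrt (2 * lam))
        ≤ β * a ^ (2 * L + 3 - Real.sqrt (2 * lam)) := by
  have ha0 : 0 < a := by linarith
  have hb0 : 0 < b := by by_contra h; nlinarith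
  have hb1 : b < 1 := by nlinarith
  have hE : a ^ (2 * L + 3 - Real.sqrt (2 * lam))
      = a ^ (2 * L + 3) * a ^ (-Real.sqrt (2 * lam)) := by
    rw [sub_eq_add_neg, Real.rpow_add ha0, ← Real.rpow_natCast a (2 * L + 3)]
    push_cast
    rfl
  have hp : 0 < a ^ (-Real.sqrt (2 * lam)) := Real.rpow_pos_of_pos ha0 _
  have hb2 : 0 < b ^ (2 * L + 1) := by positivity
  have hb3 : b ^ (2 * L + 1) ≤ 1 := pow_le_one₀ hb0.le hb1.le
  rw [countFn_eq ha hab h1 h2, ← hβ, hE]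
  generalize a ^ (-Real.sqrt (2 * lam)) = p at *
  have hβp : 0 < β * p := mul_pos hβ0 hp
  constructor <;> nlinarith

lemma exists_index {lam : ℝ} (h : 0 ≤ lam) : ∃ L : ℕ,
    2 * (L : ℝ) ^ 2 + 2 * L ≤ lam ∧
      lam < 2 * ((L : ℝ) + 1) ^ 2 + 2 * ((L : ℝ) + 1) := by
  have hs := Real.sq_sqrt (show 0 ≤ 2 * lam + 1 by linarith)
  have hs1 : 1 ≤ Real.sqrt (2 * lam + 1) := Real.one_le_sqrt.2 (by linarith)
  have hf := Nat.floor_le (show 0 ≤ (Real.sqrt (2 * lam + 1) - 1) / 2 by linarith)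
  have hg := Nat.lt_floor_add_one ((Real.sqrt (2 * lam + 1) - 1) / 2)
  refine ⟨⌊(Real.sqrt (2 * lam + 1) - 1) / 2⌋₊, ?_, ?_⟩
  · have := Nat.cast_nonneg (α := ℝ) ⌊(Real.sqrt (2 * lam + 1) - 1) / 2⌋₊
    nlinarith
  · nlinarith

/-- The Weyl-type formula for any `a > 1` and `b = a⁻¹`. -/
lemma weyl_aux {a b β : ℝ} (ha : 1 < a) (hab : a * b = 1)
    (hβ : β = 1 / ((a - b) * (a ^ 2 - 1))) (hβ0 : 0 < β) :
    limsup (fun lam : ℝ => countFn a b lam * a ^ (-Real.sqrt (2 * lam))) atTop = β * a ^ 2 ∧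
      liminf (fun lam : ℝ => countFn a b lam * a ^ (-Real.sqrt (2 * lam))) atTop = β := by
  have ha0 : 0 < a := by linarith
  have hmono : ∀ {x y : ℝ}, x ≤ y → β * a ^ x ≤ β * a ^ y := fun h =>
    mul_le_mul_of_nonneg_left (Real.rpow_le_rpow_of_exponent_le ha.le h) hβ0.le
  -- the error term of `counting_bounds`
  have herr : Tendsto (fun t : ℝ => β * (2 * a) * a ^ (-Real.sqrt (2 * t))) atTop (nhds 0) := by
    have h := (tendsto_rpow_atBot_of_base_gt_one a ha).comp
      (tendsto_neg_atTop_atBot.comp tendsto_sqrt_two_mul)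
    simpa using h.const_mul (β * (2 * a))
  have hrp : ∀ (d c : ℝ), 0 ≤ c → Tendsto (fun t : ℝ =>
      β * a ^ (d + (Real.sqrt (2 * t + c) - Real.sqrt (2 * t)))) atTop (nhds (β * a ^ d)) := by
    intro d c hc
    have h := (tendsto_sqrt_add_sub_sqrt hc).const_add d
    rw [add_zero] at h
    exact ((Real.continuous_const_rpow ha0.ne').tendsto d |>.comp h).const_mul β
  have hU := hrp 2 1 zero_le_one
  have hL : Tendsto (fun t : ℝ => β - β * (2 * a) * a ^ (-Real.sqrt (2 * t))) atTop
      (nhds β) := by simpa using herr.const_sub β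
  have hUb : ∀ t : ℝ, 0 ≤ t → countFn a b t * a ^ (-Real.sqrt (2 * t)) ≤
      β * a ^ (2 + (Real.sqrt (2 * t + 1) - Real.sqrt (2 * t))) := by
    intro t ht
    obtain ⟨L, h1, h2⟩ := exists_index ht
    refine (counting_bounds ha hab h1 h2 hβ hβ0).2.trans (hmono ?_)
    have : 2 * (L : ℝ) + 1 ≤ Real.sqrt (2 * t + 1) := Real.le_sqrt_of_sq_le (by linarith)
    linarith
  have hLb : ∀ t : ℝ, 0 ≤ t → β - β * (2 * a) * a ^ (-Real.sqrt (2 * t)) ≤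
      countFn a b t * a ^ (-Real.sqrt (2 * t)) := by
    intro t ht
    obtain ⟨L, h1, h2⟩ := exists_index ht
    refine le_trans ?_ (counting_bounds ha hab h1 h2 hβ hβ0).1
    have : Real.sqrt (2 * t) ≤ 2 * L + 3 := (Real.sqrt_le_left (by positivity)).2 (by linarith)
    have := hmono (show 0 ≤ 2 * L + 3 - Real.sqrt (2 * t) by linarith)
    rw [Real.rpow_zero, mul_one] at this
    linarith
  have hpow : a ^ (2 : ℝ) = a ^ 2 := Real.rpow_two a
  rw [hpow] at hU
  have hcast : Tendsto (fun k : ℕ => (k : ℝ)) atTop atTop := tendsto_natCast_atTop_atTop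
  have h0 := eventually_ge_atTop (0 : ℝ)
  constructor
  · have hx : Tendsto (fun k : ℕ => 2 * (k : ℝ) ^ 2 + 2 * k) atTop atTop :=
      tendsto_atTop_mono (fun k => by nlinarith [sq_nonneg (k : ℝ), k.cast_nonneg (α := ℝ)]) hcast
    refine limsup_eq_of_bound_of_seq (c := 0) (h0.mono hUb) hU ?_ hx ?_
    · filter_upwards [h0, hL.eventually (lt_mem_nhds hβ0)] with t ht h
      exact h.le.trans (hLb t ht)
    · have hlow : Tendsto (fun t : ℝ => β * a ^ 2 - β * (2 * a) * a ^ (-Real.sqrt (2 * t))) atTop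
          (nhds (β * a ^ 2)) := by simpa using herr.const_sub (β * a ^ 2)
      refine tendsto_of_tendsto_of_tendsto_of_le_of_le (hlow.comp hx) (hU.comp hx) ?_ ?_
      · intro k
        have hk := k.cast_nonneg (α := ℝ)
        refine le_trans ?_ (counting_bounds ha hab (L := k) le_rfl (by nlinarith) hβ hβ0).1
        have : Real.sqrt (2 * (2 * (k : ℝ) ^ 2 + 2 * k)) ≤ 2 * k + 1 :=
          (Real.sqrt_le_left (by positivity)).2 (by linarith)
        have := hmono (show 2 ≤ 2 * (k : ℝ) + 3 - Real.sqrt (2 * (2 * (k : ℝ) ^ 2 + 2 * k)) by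
          linarith)
        rw [hpow] at this
        simp only [Function.comp]
        linarith
      · intro k
        exact hUb _ (by positivity)
  · -- `2 x_k + 2 = (2k+3)^2`, i.e. `x_k = λ_{k+1} - 1/2`
    have hx : Tendsto (fun k : ℕ => ((2 * (k : ℝ) + 3) ^ 2 - 2) / 2) atTop atTop :=
      tendsto_atTop_mono (fun k => by nlinarith [sq_nonneg (k : ℝ), k.cast_nonneg (α := ℝ)]) hcast
    refine liminf_eq_of_bound_of_seq (c := β * a ^ 2 + 1) (h0.mono hLb) hL ?_ hx ?_
    · filter_upwards [h0, hU.eventually (gt_mem_nhds (lt_add_one _))] with t ht h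
      exact (hUb t ht).trans h.le
    · have hup := hrp 0 2 zero_le_two
      rw [Real.rpow_zero, mul_one] at hup
      refine tendsto_of_tendsto_of_tendsto_of_le_of_le (hL.comp hx) (hup.comp hx) ?_ ?_
      · intro k
        exact hLb _ (by nlinarith [sq_nonneg (k : ℝ), k.cast_nonneg (α := ℝ)])
      · intro k
        have hk := k.cast_nonneg (α := ℝ)
        refine (counting_bounds ha hab (L := k) (by nlinarith) (by nlinarith) hβ hβ0).2.trans
          (hmono ?_)
        have : 2 * (k : ℝ) + 3 ≤ Real.sqrt (2 * (((2 * (k : ℝ) + 3) ^ 2 - 2) / 2) + 2) :=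
          Real.le_sqrt_of_sq_le (by linarith)
        linarith

/-- The non-quasiclassical Weyl-type formula (Proposition 5.3): for the twisted Casimir
operator on the twisted non-quasiclassical hyperboloid, with eigenvalues
`λ_l = 2l² + 2l` of multiplicities `m_l = (α₂^{2l+1} − α₁^{2l+1})/(α₂ − α₁)`, the
counting function `N(λ)` satisfies
`limsup N(λ)·α₂^{−√(2λ)} = β·α₂²` and `liminf N(λ)·α₂^{−√(2λ)} = β`,
where `β = 1/((α₂ − α₁)(α₂² − 1)) > 0`. -/
theorem weyl_type_formula (n : ℕ) (hn : 3 ≤ n) :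
    let α₁ : ℝ := ((n : ℝ) - Real.sqrt ((n : ℝ) ^ 2 - 4)) / 2
    let α₂ : ℝ := ((n : ℝ) + Real.sqrt ((n : ℝ) ^ 2 - 4)) / 2
    let mul : ℕ → ℝ := fun l => (α₂ ^ (2 * l + 1) - α₁ ^ (2 * l + 1)) / (α₂ - α₁)
    let N : ℝ → ℝ := fun lam =>
      ∑' l : ℕ, if 2 * (l : ℝ) ^ 2 + 2 * (l : ℝ) ≤ lam then mul l else 0
    let β : ℝ := 1 / ((α₂ - α₁) * (α₂ ^ 2 - 1))
    0 < β ∧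
      limsup (fun lam : ℝ => N lam * α₂ ^ (-Real.sqrt (2 * lam))) atTop = β * α₂ ^ 2 ∧
      liminf (fun lam : ℝ => N lam * α₂ ^ (-Real.sqrt (2 * lam))) atTop = β := by
  intro α₁ α₂ mul N β
  have hn' : (3 : ℝ) ≤ n := by exact_mod_cast hn
  have hs := Real.sq_sqrt (show 0 ≤ (n : ℝ) ^ 2 - 4 by nlinarith)
  have hs0 : 0 < Real.sqrt ((n : ℝ) ^ 2 - 4) := Real.sqrt_pos.2 (by nlinarith)
  have hab : α₂ * α₁ = 1 := by
    simp only [α₁, α₂]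
    linear_combination (-1 / 4) * hs
  have ha : 1 < α₂ := by
    simp only [α₂]
    linarith
  have hβ0 : 0 < β := by
    have h1 : 0 < α₂ - α₁ := by
      simp only [α₁, α₂]
      linarith
    have h2 : 0 < α₂ ^ 2 - 1 := by nlinarith
    exact one_div_pos.2 (mul_pos h1 h2)
  exact ⟨hβ0, weyl_aux ha hab rfl hβ0⟩
end
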